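/- arXiv:2012.02563 — 3 statements merged into one kernel-verified Lean document; each statement's English description precedes it below -/
import Mathlib

section
/- For every positive integer n, the sum of the fourth powers of the binomial coefficients satisfies ∑_{k=0}^{n} C(n,k)^4 = ∑_{k=0}^{n} C(n,k)^2 · C(2k,n) · C(2n−k,n). -/
/-- Vandermonde's identity, summed along a diagonal. -/
theorem sum_choose_mul_choose_add (m n c N : ℕ) (hN : m < N) :
    ∑ k ∈ Finset.range N, m.choose k * n.choose (k + c) = (m + n).choose (m + c) := by
  have trunc : ∑ k ∈ Finset.range (m + 1), m.choose k * n.choose (k + c) =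
      ∑ k ∈ Finset.range N, m.choose k * n.choose (k + c) := by
    refine Finset.sum_subset (Finset.range_mono hN) fun k _ hk => ?_
    rw [Nat.choose_eq_zero_of_lt (by simpa using hk), zero_mul]
  rw [← trunc, ← Finset.sum_range_reflect, Nat.add_choose_eq,
    Finset.Nat.sum_antidiagonal_eq_sum_range_succ fun i j => m.choose i * n.choose j]
  have trunc' : ∑ k ∈ Finset.range (m + 1), m.choose k * n.choose (m + c - k) =
      ∑ k ∈ Finset.range (m + c).succ, m.choose k * n.choose (m + c - k) := by
    refine Finset.sum_subset (Finset.range_mono (by lia)) fun k _ hk => ?_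
    rw [Nat.choose_eq_zero_of_lt (by simpa using hk), zero_mul]
  rw [← trunc']
  refine Finset.sum_congr rfl fun k hk => ?_
  have hk : k ≤ m := by simpa [Nat.lt_succ_iff] using hk
  rw [show m + 1 - 1 - k = m - k by lia, Nat.choose_symm hk,
    show m - k + c = m + c - k by lia]

theorem choose_add_mul_choose_self (a i t : ℕ) :
    a.choose (i + t) * (i + t).choose i = a.choose i * (a - i).choose t := by
  rcases Nat.lt_or_ge a (i + t) with h | h
  · rw [Nat.choose_eq_zero_of_lt h, zero_mul]
    rcases Nat.lt_or_ge a i with ha | ha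
    · rw [Nat.choose_eq_zero_of_lt ha, zero_mul]
    · rw [Nat.choose_eq_zero_of_lt (show a - i < t by lia), mul_zero]
  · rw [Nat.choose_mul (Nat.le_add_right i t), Nat.add_sub_cancel_left]

/-- Both sides count disjoint pairs consisting of an `a`-subset and a `b`-subset of an `n`-set. -/
theorem choose_mul_choose_sub_comm (n a b : ℕ) :
    n.choose a * (n - a).choose b = n.choose b * (n - b).choose a := by
  rw [← choose_add_mul_choose_self, ← choose_add_mul_choose_self, Nat.choose_symm_add,
    add_comm a b]

/-- Summing over a shifted range a function supported on `k ≤ j`. -/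
theorem sum_range_eq_sum_range_add {f : ℕ → ℕ} {k N : ℕ} (hk : k ≤ N)
    (hf : ∀ j < k, f j = 0) :
    ∑ j ∈ Finset.range N, f j = ∑ t ∈ Finset.range (N - k), f (k + t) := by
  obtain ⟨m, rfl⟩ := Nat.exists_eq_add_of_le hk
  rw [Finset.sum_range_add, Finset.sum_eq_zero fun j hj => hf j (Finset.mem_range.mp hj), zero_add,
    Nat.add_sub_cancel_left]

/-- A case of the Pfaff–Saalschütz summation. -/
theorem sum_choose_mul_choose_mul_choose (a b N : ℕ) (hN : a < N) :
    ∑ k ∈ Finset.range N, (a + b + k).choose k * a.choose k * b.choose k =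
      ((a + b).choose a) ^ 2 := by
  have expand : ∀ k ∈ Finset.range N, (a + b + k).choose k * a.choose k * b.choose k =
      ∑ i ∈ Finset.range N, (a + b).choose i * (a.choose k * k.choose i * b.choose k) := by
    intro k hk
    have h := sum_choose_mul_choose_add k (a + b) 0 N (Finset.mem_range.mp hk)
    simp only [add_zero] at h
    rw [add_comm (a + b) k, ← h, Finset.sum_mul, Finset.sum_mul]
    exact Finset.sum_congr rfl fun i _ => by ring
  have inner : ∀ i ∈ Finset.range N,
      ∑ k ∈ Finset.range N, (a + b).choose i * (a.choose k * k.choose i * b.choose k) =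
        (a + b).choose a * (a.choose i * b.choose (i + 0)) := by
    intro i hi
    rw [← Finset.mul_sum, sum_range_eq_sum_range_add (Finset.mem_range.mp hi).le
      fun j hj => by simp [Nat.choose_eq_zero_of_lt hj]]
    simp only [choose_add_mul_choose_self, mul_assoc, ← Finset.mul_sum]
    rcases Nat.lt_or_ge a i with ha | ha
    · simp [Nat.choose_eq_zero_of_lt ha]
    · have h := sum_choose_mul_choose_add (a - i) b i (N - i) (by lia)
      simp only [add_comm _ i] at h
      have hc := choose_mul_choose_sub_comm (a + b) i a
      rw [Nat.add_sub_cancel_left] at hc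
      rw [h, show i + (a - i) = a by lia, show a - i + b = a + b - i by lia, add_zero,
        mul_left_comm, hc]
      ring
  rw [Finset.sum_congr rfl expand, Finset.sum_comm, Finset.sum_congr rfl inner, ← Finset.mul_sum,
    sum_choose_mul_choose_add a b 0 N hN, add_zero, sq]

theorem sum_choose_sq_mul_choose_mul_choose {n k : ℕ} (hk : k ≤ n) :
    ∑ j ∈ Finset.range (n + 1), n.choose j ^ 2 * (j.choose k * (n - j).choose k) =
      n.choose k ^ 2 * (2 * (n - k)).choose n := by
  rw [sum_range_eq_sum_range_add (show k ≤ n + 1 by lia)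
    fun j hj => by simp [Nat.choose_eq_zero_of_lt hj]]
  have term : ∀ t, n.choose (k + t) ^ 2 * ((k + t).choose k * (n - (k + t)).choose k) =
      n.choose k * (n - k).choose k * ((n - k - k).choose t * n.choose (t + k)) := by
    intro t
    have h₁ := choose_add_mul_choose_self n k t
    have h₂ := choose_mul_choose_sub_comm (n - k) t k
    rw [Nat.sub_sub n k t] at h₂
    rw [add_comm t k]
    calc _ = n.choose (k + t) * (n.choose (k + t) * (k + t).choose k) *
          (n - (k + t)).choose k := by ring
      _ = n.choose k * n.choose (k + t) * ((n - k).choose t * (n - (k + t)).choose k) := by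
          rw [h₁]; ring
      _ = _ := by rw [h₂]; ring
  simp only [term, ← Finset.mul_sum]
  rw [sum_choose_mul_choose_add _ _ _ _ (show n - k - k < n + 1 - k by lia)]
  rcases Nat.lt_or_ge (n - k) k with h | h
  · rw [Nat.choose_eq_zero_of_lt h, Nat.choose_eq_zero_of_lt (show 2 * (n - k) < n by lia)]
    simp
  · rw [show n - k - k + n = 2 * (n - k) by lia, show n - k - k + k = n - k by lia]
    have h := choose_add_mul_choose_self (2 * (n - k)) (n - k) k
    rw [show n - k + k = n by lia, show 2 * (n - k) - (n - k) = n - k by lia,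
      Nat.choose_symm hk] at h
    rw [sq, mul_assoc, mul_assoc, mul_comm (n.choose k) (Nat.choose _ n), h]
    ring

theorem franel4_strehl (n : ℕ) (hn : 0 < n) :
    ∑ k ∈ Finset.range (n + 1), (n.choose k) ^ 4 =
      ∑ k ∈ Finset.range (n + 1),
        (n.choose k) ^ 2 * ((2 * k).choose n) * ((2 * n - k).choose n) := by
  have expand : ∀ j ∈ Finset.range (n + 1), n.choose j ^ 4 = ∑ k ∈ Finset.range (n + 1),
      (n + k).choose k * (n.choose j ^ 2 * (j.choose k * (n - j).choose k)) := by
    intro j hj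
    have hj := Finset.mem_range.mp hj
    have h := sum_choose_mul_choose_mul_choose j (n - j) (n + 1) hj
    rw [show j + (n - j) = n by lia] at h
    rw [show n.choose j ^ 4 = n.choose j ^ 2 * n.choose j ^ 2 by ring]
    nth_rw 2 [← h]
    rw [Finset.mul_sum]
    exact Finset.sum_congr rfl fun k _ => by ring
  rw [Finset.sum_congr rfl expand, Finset.sum_comm, ← Finset.sum_range_reflect]
  refine Finset.sum_congr rfl fun k hk => ?_
  have hk : k ≤ n := by simpa [Nat.lt_succ_iff] using hk
  rw [← Finset.mul_sum, sum_choose_sq_mul_choose_mul_choose (by lia),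
    show n + 1 - 1 - k = n - k by lia, Nat.choose_symm hk, show n - (n - k) = k by lia,
    show 2 * n - k = n + (n - k) by lia, Nat.choose_symm_add]
  ring
end

section
/- For all nonnegative integers n, m and every complex number x, the Riordan identity holds: ∑_{k=0}^{n} C(n,k) · C(m,n−k) · C(x+n−k, n+m) = C(x,n) · C(x,m). -/
/-- The generalized binomial coefficient `x(x-1)⋯(x-j+1)/j!` for complex `x`. -/
noncomputable def cchoose (x : ℂ) (j : ℕ) : ℂ :=
  (∏ i ∈ Finset.range j, (x - i)) / (j.factorial : ℂ)

theorem cchoose_zero (x : ℂ) : cchoose x 0 = 1 := by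
  simp [cchoose]

theorem cchoose_succ_right (x : ℂ) (j : ℕ) :
    (j + 1) * cchoose x (j + 1) = (x - j) * cchoose x j := by
  have h : (j.factorial : ℂ) ≠ 0 := by exact_mod_cast j.factorial_ne_zero
  have h' : (j + 1 : ℂ) ≠ 0 := by exact_mod_cast j.succ_ne_zero
  simp only [cchoose, Finset.prod_range_succ, Nat.factorial_succ]
  push_cast
  field_simp

theorem cchoose_add_one_succ (x : ℂ) (j : ℕ) :
    (j + 1) * cchoose (x + 1) (j + 1) = (x + 1) * cchoose x j := by
  have h : (j.factorial : ℂ) ≠ 0 := by exact_mod_cast j.factorial_ne_zero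
  have h' : (j + 1 : ℂ) ≠ 0 := by exact_mod_cast j.succ_ne_zero
  simp only [cchoose, Finset.prod_range_succ', Nat.factorial_succ]
  push_cast
  simp only [add_sub_add_right_eq_sub, sub_zero]
  field_simp

theorem sub_mul_cchoose (x : ℂ) (n m j : ℕ) :
    (x - n) * cchoose (x + j) (n + m) =
      (n + j + 1) * cchoose (x + j) (n + m + 1) +
        (m - j) * cchoose (x + (j + 1 : ℕ)) (n + m + 1) := by
  have h' : ((n + m : ℕ) + 1 : ℂ) ≠ 0 := by exact_mod_cast (n + m).succ_ne_zero
  have h₁ := cchoose_succ_right (x + j) (n + m)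
  have h₂ := cchoose_add_one_succ (x + j) (n + m)
  rw [Nat.cast_succ, ← add_assoc]
  apply mul_left_cancel₀ h'
  push_cast at h₁ h₂ ⊢
  linear_combination (-(n + j + 1 : ℂ)) * h₁ - (m - j : ℂ) * h₂

theorem cast_choose_succ_mul (n j : ℕ) :
    (n.choose (j + 1) : ℂ) * (j + 1) = n.choose j * (n - j) := by
  rcases le_or_gt j n with h | h
  · have := Nat.choose_succ_right_eq n j
    rw [← Nat.cast_sub h]
    exact_mod_cast this
  · simp [Nat.choose_eq_zero_of_lt h, Nat.choose_eq_zero_of_lt (h.trans j.lt_succ_self)]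

theorem sum_choose_mul_choose_mul_cchoose (n m : ℕ) (x : ℂ) :
    ∑ j ∈ Finset.range (n + 1),
        (n.choose j : ℂ) * (m.choose j : ℂ) * cchoose (x + (j : ℂ)) (n + m) =
      cchoose x n * cchoose x m := by
  induction n with
  | zero => simp [cchoose_zero]
  | succ n ih =>
    have h' : (n + 1 : ℂ) ≠ 0 := by exact_mod_cast n.succ_ne_zero
    apply mul_left_cancel₀ h'
    rw [← mul_assoc, cchoose_succ_right, mul_assoc, ← ih, Nat.add_right_comm n 1 m]
    have expand : ∀ j ∈ Finset.range (n + 1),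
        (x - n) * ((n.choose j : ℂ) * (m.choose j : ℂ) * cchoose (x + j) (n + m)) =
          (n.choose j : ℂ) * m.choose j * (n + j + 1) * cchoose (x + j) (n + m + 1) +
          (n.choose j : ℂ) * m.choose j * (m - j) *
            cchoose (x + (j + 1 : ℕ)) (n + m + 1) := fun j _ => by
      linear_combination (n.choose j : ℂ) * m.choose j * sub_mul_cchoose x n m j
    have extend : ∑ j ∈ Finset.range (n + 1),
        (n.choose j : ℂ) * m.choose j * (n + j + 1) * cchoose (x + j) (n + m + 1) =
        ∑ j ∈ Finset.range (n + 1 + 1),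
        (n.choose j : ℂ) * m.choose j * (n + j + 1) * cchoose (x + j) (n + m + 1) := by
      simp [Finset.sum_range_succ _ (n + 1)]
    rw [Finset.mul_sum _ _ (x - n : ℂ), Finset.sum_congr rfl expand, Finset.sum_add_distrib,
      extend, Finset.sum_range_succ' _ (n + 1), Finset.sum_range_succ' _ (n + 1),
      add_right_comm (Finset.sum _ _),
      ← Finset.sum_add_distrib, mul_add, Finset.mul_sum]
    congr 1
    · refine Finset.sum_congr rfl fun j _ => ?_
      have h₁ := cast_choose_succ_mul n j
      have h₂ := cast_choose_succ_mul m j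
      rw [Nat.choose_succ_succ' n j]
      generalize cchoose _ _ = B
      push_cast
      linear_combination (-B * m.choose (j + 1)) * h₁ + (B * n.choose j) * h₂
    · simp

theorem riordan_identity (n m : ℕ) (x : ℂ) :
    ∑ k ∈ Finset.range (n + 1),
        (n.choose k : ℂ) * (m.choose (n - k) : ℂ) * cchoose (x + ((n - k : ℕ) : ℂ)) (n + m) =
      cchoose x n * cchoose x m := by
  rw [← sum_choose_mul_choose_mul_cchoose, ← Finset.sum_range_reflect]
  refine Finset.sum_congr rfl fun j hj => ?_
  have hj : j ≤ n := Finset.mem_range_succ_iff.mp hj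
  rw [Nat.add_sub_cancel, Nat.choose_symm hj, Nat.sub_sub_self hj]
end

section
/- For every nonnegative integer n, ∑_{k=0}^{n} C(n,k)^2 · C(2k,k) · C(2(n−k),n−k) = ∑_{k=0}^{n} (−1)^k · C(2k,k) · C(2(n−k),n−k) · C(2(n−k),n) · C(n,k), where both sides are integers (the left-hand side is the n-th Domb number). -/
namespace Domb

/-- Extension by zero of a sequence to the integers. -/
def extendZero (f : ℕ → ℚ) (z : ℤ) : ℚ := if 0 ≤ z then f z.toNat else 0

theorem extendZero_natCast (f : ℕ → ℚ) (n : ℕ) : extendZero f n = f n := by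
  simp [extendZero]

theorem extendZero_of_neg (f : ℕ → ℚ) {z : ℤ} (hz : z < 0) : extendZero f z = 0 := by
  simp [extendZero, not_le.mpr hz]

/-- A first-order recurrence whose leading coefficient vanishes at `0` holds on all of `ℤ` for the
extension by zero. -/
theorem extendZero_recurrence {f : ℕ → ℚ} {p q : ℚ → ℚ} (hp : p 0 = 0)
    (h : ∀ m : ℕ, p (m + 1) * f (m + 1) = q (m + 1) * f m) (z : ℤ) :
    p z * extendZero f z = q z * extendZero f (z - 1) := by
  obtain hz | rfl | hz := lt_trichotomy z 0
  · rw [extendZero_of_neg f hz, extendZero_of_neg f (by lia)]; simp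
  · rw [extendZero_of_neg f (z := 0 - 1) (by lia)]; simp [hp]
  · obtain ⟨m, rfl⟩ : ∃ m : ℕ, z = m + 1 := ⟨(z - 1).toNat, by lia⟩
    have := h m
    rw [add_sub_cancel_right, extendZero_natCast]
    have e := extendZero_natCast f (m + 1)
    push_cast at e ⊢
    rw [e, this]

theorem centralBinom_succ_cast (m : ℕ) :
    ((m : ℚ) + 1) * Nat.centralBinom (m + 1) = 2 * (2 * m + 1) * Nat.centralBinom m := by
  exact_mod_cast Nat.succ_mul_centralBinom_succ m

theorem factorial_succ_cast (m : ℕ) :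
    ((m + 1).factorial : ℚ) = (m + 1) * m.factorial := by
  exact_mod_cast Nat.factorial_succ m

/-- `C(2k,k) / k!²`, extended by zero. -/
def binomDivSq : ℤ → ℚ := extendZero fun k ↦ (Nat.centralBinom k : ℚ) / (k.factorial : ℚ) ^ 2

/-- `C(2k,k) / k!`, extended by zero. -/
def binomDiv : ℤ → ℚ := extendZero fun k ↦ (Nat.centralBinom k : ℚ) / (k.factorial : ℚ)

/-- `C(2m,m)² m!`, extended by zero. -/
def binomSqMul : ℤ → ℚ := extendZero fun m ↦ (Nat.centralBinom m : ℚ) ^ 2 * (m.factorial : ℚ)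

/-- `1 / s!`, extended by zero. -/
def invFactorial : ℤ → ℚ := extendZero fun s ↦ 1 / (s.factorial : ℚ)

theorem binomDivSq_recurrence (z : ℤ) :
    (z : ℚ) ^ 3 * binomDivSq z = 2 * (2 * z - 1) * binomDivSq (z - 1) := by
  refine extendZero_recurrence (p := fun x ↦ x ^ 3) (q := fun x ↦ 2 * (2 * x - 1))
    (by simp) (fun m ↦ ?_) z
  have := Nat.cast_ne_zero (R := ℚ) |>.mpr m.factorial_ne_zero
  have h := centralBinom_succ_cast m
  rw [factorial_succ_cast]
  field_simp
  linear_combination h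

theorem binomDiv_recurrence (z : ℤ) :
    (z : ℚ) ^ 2 * binomDiv z = 2 * (2 * z - 1) * binomDiv (z - 1) := by
  refine extendZero_recurrence (p := fun x ↦ x ^ 2) (q := fun x ↦ 2 * (2 * x - 1))
    (by simp) (fun m ↦ ?_) z
  have := Nat.cast_ne_zero (R := ℚ) |>.mpr m.factorial_ne_zero
  have h := centralBinom_succ_cast m
  rw [factorial_succ_cast]
  field_simp
  linear_combination h

theorem binomSqMul_recurrence (z : ℤ) :
    (z : ℚ) * binomSqMul z = 4 * (2 * z - 1) ^ 2 * binomSqMul (z - 1) := by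
  refine extendZero_recurrence (p := fun x ↦ x) (q := fun x ↦ 4 * (2 * x - 1) ^ 2)
    (by simp) (fun m ↦ ?_) z
  have h := centralBinom_succ_cast m
  rw [factorial_succ_cast]
  linear_combination (m.factorial : ℚ) * ((m + 1) * (m + 1).centralBinom +
    2 * (2 * m + 1) * m.centralBinom) * h

theorem invFactorial_recurrence (z : ℤ) :
    (z : ℚ) * invFactorial z = invFactorial (z - 1) := by
  rw [← one_mul (invFactorial (z - 1))]
  refine extendZero_recurrence (p := fun x ↦ x) (q := fun _ ↦ 1) (by simp) (fun m ↦ ?_) z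
  have := Nat.cast_ne_zero (R := ℚ) |>.mpr m.factorial_ne_zero
  rw [factorial_succ_cast]
  field_simp

theorem intCast_mul_two_sub_ne_zero (z c : ℤ) (hc : c % 2 = 1) : (z * 2 - c : ℚ) ≠ 0 := by
  have : z * 2 - c ≠ 0 := by lia
  exact_mod_cast this

theorem binomDivSq_sub_one (z : ℤ) :
    binomDivSq (z - 1) = (z : ℚ) ^ 3 * binomDivSq z / (2 * (2 * z - 1)) := by
  have := intCast_mul_two_sub_ne_zero z 1 rfl
  rw [binomDivSq_recurrence]
  rw [mul_comm] at this
  push_cast at this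
  field_simp

theorem binomSqMul_sub_one (z : ℤ) :
    binomSqMul (z - 1) = (z : ℚ) * binomSqMul z / (4 * (2 * z - 1) ^ 2) := by
  have := intCast_mul_two_sub_ne_zero z 1 rfl
  rw [binomSqMul_recurrence]
  rw [mul_comm] at this
  push_cast at this
  field_simp

/-- The summand of the convolution square of `C(2k,k) / k!²`, which is the `n`-th Domb number
divided by `n!²`. -/
def convTerm (n : ℤ) (k : ℕ) : ℚ := binomDivSq k * binomDivSq (n - k)

/-- Zeilberger certificate for `convTerm`. -/
def convCert (n : ℤ) (k : ℕ) : ℚ :=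
  (k : ℚ) ^ 3 * (-56 + 74 * k - 30 * k ^ 2 + 4 * k ^ 3 - 104 * n + 89 * n * k - 18 * n * k ^ 2
    - 62 * n ^ 2 + 26 * n ^ 2 * k - 12 * n ^ 3) / (2 * (n + 2 - k) - 1) * convTerm (n + 2) k

theorem convTerm_telescopes (n : ℤ) (k : ℕ) :
    ((n : ℚ) + 2) ^ 5 * convTerm (n + 2) k
      - 2 * (2 * n + 3) * (5 * (n + 1) ^ 2 + 5 * (n + 1) + 2) * convTerm (n + 1) k
      + 64 * (n + 1) * convTerm n k = convCert n (k + 1) - convCert n k := by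
  obtain ⟨j, rfl⟩ : ∃ j : ℤ, n = j + k - 2 := ⟨n - k + 2, by ring⟩
  have h1 := intCast_mul_two_sub_ne_zero j 1 rfl
  have h3 := intCast_mul_two_sub_ne_zero j 3 rfl
  have hu := binomDivSq_recurrence (k + 1)
  have hj := binomDivSq_sub_one j
  have hj' := binomDivSq_sub_one (j - 1)
  rw [add_sub_cancel_right] at hu
  rw [hj] at hj'
  simp only [convCert, convTerm]
  push_cast at *
  rw [show j + k - 2 + 2 - k = j by ring, show j + k - 2 + 1 - k = j - 1 by ring,
    show j + k - 2 - k = j - 1 - 1 by ring, show j + k - 2 + 2 - (k + 1 : ℤ) = j - 1 by ring, hj', hj]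
  have e1 : (j + k - 2 + 2 - k : ℚ) = j := by ring
  have e2 : (2 * (j + k - 2 + 2 - (k + 1)) - 1 : ℚ) = 2 * j - 3 := by ring
  have e3 : (2 * (j - 1) - 1 : ℚ) = 2 * j - 3 := by ring
  rw [e1, e2, e3]
  generalize binomDivSq (k + 1) = U at *
  generalize binomDivSq k = u at *
  generalize binomDivSq j = w at *
  obtain rfl : U = 2 * (2 * (k + 1) - 1) * u / ((k : ℚ) + 1) ^ 3 := by
    rw [← hu]; field_simp
  field_simp
  ring

/-- The summand `(-1)^k C(2k,k) C(2(n-k),n-k) C(2(n-k),n) C(n,k)`, as a product of sequences. -/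
def altTerm (n : ℤ) (k : ℕ) : ℚ :=
  (-1) ^ k * binomDiv k * binomSqMul (n - k) * invFactorial (n - 2 * k)

/-- Zeilberger certificate for `altTerm`. -/
def altCert (n : ℤ) (k : ℕ) : ℚ :=
  (k : ℚ) ^ 2 * (-38 + 42 * k - 12 * k ^ 2 - 79 * n + 58 * n * k - 8 * n * k ^ 2
    - 54 * n ^ 2 + 20 * n ^ 2 * k - 12 * n ^ 3) / (2 * (n + 2 - k) - 1) ^ 2 * altTerm (n + 2) k

theorem altTerm_telescopes (n : ℤ) (k : ℕ) :
    ((n : ℚ) + 2) ^ 3 * altTerm (n + 2) k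
      - 2 * (2 * n + 3) * (5 * (n + 1) ^ 2 + 5 * (n + 1) + 2) * altTerm (n + 1) k
      + 64 * (n + 1) ^ 3 * altTerm n k = altCert n (k + 1) - altCert n k := by
  obtain ⟨j, rfl⟩ : ∃ j : ℤ, n = j + k - 2 := ⟨n - k + 2, by ring⟩
  have h1 := intCast_mul_two_sub_ne_zero j 1 rfl
  have h3 := intCast_mul_two_sub_ne_zero j 3 rfl
  have hu := binomDiv_recurrence (k + 1)
  have hj := binomSqMul_sub_one j
  have hj' := binomSqMul_sub_one (j - 1)
  have hs := invFactorial_recurrence (j - k)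
  have hs' := invFactorial_recurrence (j - k - 1)
  rw [add_sub_cancel_right] at hu
  rw [hj] at hj'
  rw [← hs] at hs'
  simp only [altCert, altTerm]
  push_cast at *
  rw [show j + k - 2 + 2 - k = j by ring, show j + k - 2 + 1 - k = j - 1 by ring,
    show j + k - 2 - k = j - 1 - 1 by ring, show j + k - 2 + 2 - (k + 1 : ℤ) = j - 1 by ring,
    show j + k - 2 + 2 - 2 * k = j - k by ring, show j + k - 2 + 1 - 2 * k = j - k - 1 by ring,
    show j + k - 2 - 2 * k = j - k - 1 - 1 by ring,
    show j + k - 2 + 2 - 2 * (k + 1 : ℤ) = j - k - 1 - 1 by ring, hj', hj, ← hs', ← hs]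
  have e1 : (j + k - 2 + 2 - k : ℚ) = j := by ring
  have e2 : (2 * (j + k - 2 + 2 - (k + 1)) - 1 : ℚ) = 2 * j - 3 := by ring
  have e3 : (2 * (j - 1) - 1 : ℚ) = 2 * j - 3 := by ring
  rw [e1, e2, e3, pow_succ (-1 : ℚ) k]
  generalize binomDiv (k + 1) = U at *
  generalize binomDiv k = u at *
  generalize binomSqMul j = v at *
  generalize invFactorial (j - k) = w at *
  generalize (-1 : ℚ) ^ k = σ
  obtain rfl : U = 2 * (2 * (k + 1) - 1) * u / ((k : ℚ) + 1) ^ 2 := by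
    rw [← hu]; field_simp
  field_simp
  ring

theorem convTerm_eq_zero {n : ℤ} {k : ℕ} (h : n < k) : convTerm n k = 0 := by
  simp [convTerm, binomDivSq, extendZero_of_neg _ (sub_neg.mpr h)]

theorem altTerm_eq_zero {n : ℤ} {k : ℕ} (h : n < k) : altTerm n k = 0 := by
  simp [altTerm, binomSqMul, extendZero_of_neg _ (sub_neg.mpr h)]

theorem sum_range_eq_of_vanish {f : ℕ → ℚ} {n m : ℕ} (hnm : n ≤ m)
    (h : ∀ k, n < k → f k = 0) :
    ∑ k ∈ Finset.range (n + 1), f k = ∑ k ∈ Finset.range (m + 1), f k := by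
  refine Finset.sum_subset (Finset.range_mono (by lia)) fun k _ hk ↦ h k ?_
  simpa [Nat.lt_succ_iff] using hk

/-- The three-term recurrence of the Domb numbers. -/
def IsDombSolution (S : ℕ → ℚ) : Prop :=
  ∀ n : ℕ, ((n : ℚ) + 2) ^ 3 * S (n + 2)
    - 2 * (2 * n + 3) * (5 * (n + 1) ^ 2 + 5 * (n + 1) + 2) * S (n + 1)
    + 64 * (n + 1) ^ 3 * S n = 0

theorem IsDombSolution.ext {S T : ℕ → ℚ} (hS : IsDombSolution S) (hT : IsDombSolution T)
    (h0 : S 0 = T 0) (h1 : S 1 = T 1) (n : ℕ) : S n = T n := by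
  induction n using Nat.twoStepInduction with
  | zero => exact h0
  | one => exact h1
  | more n ih ih' =>
    have hne : ((n : ℚ) + 2) ^ 3 ≠ 0 := by positivity
    apply mul_left_cancel₀ hne
    have hs := hS n
    have ht := hT n
    rw [ih, ih'] at hs
    linear_combination hs - ht

theorem isDombSolution_conv : IsDombSolution fun n ↦
    (n.factorial : ℚ) ^ 2 * ∑ k ∈ Finset.range (n + 1), convTerm n k := by
  intro n
  have key : ∑ k ∈ Finset.range (n + 2 + 1), (convCert n (k + 1) - convCert n k) = 0 := by
    rw [Finset.sum_range_sub (convCert n)]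
    simp [convCert, convTerm_eq_zero (n := n + 2) (k := n + 2 + 1) (by push_cast; lia)]
  have e1 := sum_range_eq_of_vanish (f := convTerm (n + 1 : ℕ))
    (Nat.le_succ (n + 1)) fun k hk ↦ convTerm_eq_zero (by exact_mod_cast hk)
  have e0 := sum_range_eq_of_vanish (f := convTerm n)
    (Nat.le_add_right n 2) fun k hk ↦ convTerm_eq_zero (by exact_mod_cast hk)
  simp only [← convTerm_telescopes, Finset.sum_add_distrib, Finset.sum_sub_distrib,
    ← Finset.mul_sum] at key
  simp only [e1, e0, factorial_succ_cast]
  push_cast at key ⊢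
  linear_combination (n.factorial : ℚ) ^ 2 * (n + 1) ^ 2 * key

theorem isDombSolution_alt : IsDombSolution fun n ↦
    ∑ k ∈ Finset.range (n + 1), altTerm n k := by
  intro n
  have key : ∑ k ∈ Finset.range (n + 2 + 1), (altCert n (k + 1) - altCert n k) = 0 := by
    rw [Finset.sum_range_sub (altCert n)]
    simp [altCert, altTerm_eq_zero (n := n + 2) (k := n + 2 + 1) (by push_cast; lia)]
  have e1 := sum_range_eq_of_vanish (f := altTerm (n + 1 : ℕ))
    (Nat.le_succ (n + 1)) fun k hk ↦ altTerm_eq_zero (by exact_mod_cast hk)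
  have e0 := sum_range_eq_of_vanish (f := altTerm n)
    (Nat.le_add_right n 2) fun k hk ↦ altTerm_eq_zero (by exact_mod_cast hk)
  simp only [← altTerm_telescopes, Finset.sum_add_distrib, Finset.sum_sub_distrib,
    ← Finset.mul_sum] at key
  simp only [e1, e0]
  push_cast at key ⊢
  linear_combination key

theorem convTerm_eq {n k : ℕ} (hk : k ≤ n) :
    (n.factorial : ℚ) ^ 2 * convTerm n k =
      (n.choose k : ℚ) ^ 2 * ((2 * k).choose k : ℚ) * ((2 * (n - k)).choose (n - k) : ℚ) := by
  rw [convTerm, ← Nat.cast_sub hk, binomDivSq, extendZero_natCast, extendZero_natCast,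
    Nat.cast_choose ℚ hk, ← Nat.centralBinom_eq_two_mul_choose, ← Nat.centralBinom_eq_two_mul_choose]
  field_simp

theorem altTerm_eq {n k : ℕ} (hk : k ≤ n) :
    altTerm n k = (-1) ^ k * ((2 * k).choose k : ℚ) * ((2 * (n - k)).choose (n - k) : ℚ) *
      ((2 * (n - k)).choose n : ℚ) * (n.choose k : ℚ) := by
  obtain h | h := lt_or_ge n (2 * k)
  · rw [Nat.choose_eq_zero_of_lt (show 2 * (n - k) < n by lia), altTerm, invFactorial,
      extendZero_of_neg _ (by lia)]
    simp
  · obtain ⟨s, rfl⟩ := Nat.exists_eq_add_of_le h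
    have e1 : ((2 * k + s : ℕ) : ℤ) - k = (k + s : ℕ) := by push_cast; ring
    have e2 : ((2 * k + s : ℕ) : ℤ) - 2 * k = s := by push_cast; ring
    have e3 : 2 * k + s - k = k + s := by lia
    have e4 : 2 * (k + s) - (2 * k + s) = s := by lia
    have e5 : 2 * (k + s) - (k + s) = k + s := by lia
    rw [altTerm, e1, e2, binomDiv, binomSqMul, invFactorial, extendZero_natCast,
      extendZero_natCast, extendZero_natCast, Nat.cast_choose ℚ hk, e3,
      Nat.cast_choose ℚ (show 2 * k + s ≤ 2 * (k + s) by lia), e4,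
      Nat.centralBinom_eq_two_mul_choose, Nat.centralBinom_eq_two_mul_choose,
      Nat.cast_choose ℚ (show k + s ≤ 2 * (k + s) by lia), e5]
    field_simp

end Domb

open Domb in
theorem domb_identity (n : ℕ) :
    ∑ k ∈ Finset.range (n + 1),
        (n.choose k : ℤ) ^ 2 * ((2 * k).choose k : ℤ) * ((2 * (n - k)).choose (n - k) : ℤ) =
      ∑ k ∈ Finset.range (n + 1),
        (-1 : ℤ) ^ k * ((2 * k).choose k : ℤ) * ((2 * (n - k)).choose (n - k) : ℤ) *
          ((2 * (n - k)).choose n : ℤ) * (n.choose k : ℤ) := by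
  have hconv (n : ℕ) := Finset.mul_sum (Finset.range (n + 1)) (convTerm n)
    ((n.factorial : ℚ) ^ 2) |>.trans <| Finset.sum_congr rfl fun k hk ↦
      convTerm_eq (Finset.mem_range_succ_iff.mp hk)
  have halt (n : ℕ) := Finset.sum_congr rfl fun k (hk : k ∈ Finset.range (n + 1)) ↦
      altTerm_eq (Finset.mem_range_succ_iff.mp hk)
  have h := isDombSolution_conv.ext isDombSolution_alt
    (by rw [hconv, halt]; simp) (by rw [hconv, halt]; simp [Finset.sum_range_succ]; norm_num) n
  rw [hconv, halt] at h
  exact_mod_cast h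
end
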